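/- For every n ≥ 1, the number of labeled planar binary trees with n leaves avoiding the two patterns y(*, y(*,*)) and y(*, x(*, x(*,*))) equals (3n − 2)!/(n!·(2n − 1)!) = (1/n)·binom(3n − 2, n − 1). (This number is the dimension of the n-th component of the operad noncom-Flex.) -/

import Mathlib

/-- Planar binary trees with internal vertices labeled by one of two symbols `x`, `y`. -/
inductive LTree : Type
  | leaf : LTree
  | x : LTree → LTree → LTree
  | y : LTree → LTree → LTree

namespace LTree

/-- Number of leaves. -/
def leaves : LTree → ℕ
  | leaf => 1
  | x u v => u.leaves + v.leaves
  | y u v => u.leaves + v.leaves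

/-- The subtree relation. -/
inductive Subtree : LTree → LTree → Prop
  | refl (t : LTree) : Subtree t t
  | xl {s u v : LTree} : Subtree s u → Subtree s (x u v)
  | xr {s u v : LTree} : Subtree s v → Subtree s (x u v)
  | yl {s u v : LTree} : Subtree s u → Subtree s (y u v)
  | yr {s u v : LTree} : Subtree s v → Subtree s (y u v)

/-- A tree matches (at the root) one of the two forbidden patterns
`y(*, y(*,*))` and `y(*, x(*, x(*,*)))`. -/
def IsBadFlex : LTree → Prop
  | y _ (y _ _) => True
  | y _ (x _ (x _ _)) => True
  | _ => False

/-- A tree avoids the two patterns iff no subtree matches one of them. -/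
def AvoidsFlex (t : LTree) : Prop := ∀ s : LTree, Subtree s t → ¬ IsBadFlex s

end LTree

namespace LTree

lemma one_le_leaves (t : LTree) : 1 ≤ t.leaves := by
  induction t with
  | leaf => simp [leaves]
  | x u v hu hv => simp only [leaves]; omega
  | y u v hu hv => simp only [leaves]; omega

lemma finite_le (n : ℕ) : Set.Finite {t : LTree | t.leaves ≤ n} := by
  induction n with
  | zero =>
    convert Set.finite_empty (α := LTree)
    ext t
    have := one_le_leaves t
    simp; omega
  | succ n ih =>
    refine Set.Finite.subset (((Set.finite_singleton leaf).union
      (Set.Finite.image2 x ih ih)).union (Set.Finite.image2 y ih ih)) ?_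
    intro t ht
    cases t with
    | leaf => simp
    | x u v =>
      have h1 := one_le_leaves u
      have h2 := one_le_leaves v
      simp only [leaves, Set.mem_ofPred_eq] at ht
      exact Or.inl (Or.inr ⟨u, by simp; omega, v, by simp; omega, rfl⟩)
    | y u v =>
      have h1 := one_le_leaves u
      have h2 := one_le_leaves v
      simp only [leaves, Set.mem_ofPred_eq] at ht
      exact Or.inr ⟨u, by simp; omega, v, by simp; omega, rfl⟩

instance finite_sub (n : ℕ) (P : LTree → Prop) : Finite {t : LTree // t.leaves = n ∧ P t} :=
  Set.Finite.to_subtype ((finite_le n).subset (fun _ ht => ht.1.le))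

open PowerSeries in
/-- Generating function of a class of trees. -/
noncomputable def gf (P : LTree → Prop) : PowerSeries ℚ :=
  PowerSeries.mk fun n => (Nat.card {t : LTree // t.leaves = n ∧ P t} : ℚ)

lemma gf_congr {P Q : LTree → Prop} (h : ∀ t, P t ↔ Q t) : gf P = gf Q := by
  have : P = Q := funext fun t => propext (h t)
  rw [this]

lemma gf_or (P Q : LTree → Prop) (h : ∀ t, P t → Q t → False) :
    gf (fun t => P t ∨ Q t) = gf P + gf Q := by
  ext n
  simp only [gf, PowerSeries.coeff_mk, map_add]
  rw [← Nat.cast_add, ← Nat.card_sum]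
  congr 1
  classical
  refine Nat.card_congr (Equiv.trans (Equiv.subtypeEquivRight fun t => and_or_left) ?_)
  apply subtypeOrEquiv
  rw [Pi.disjoint_iff]
  intro t
  rw [disjoint_iff_inf_le]
  rintro ⟨h1, h2⟩
  exact h t h1.2 h2.2

lemma gf_leaf : gf (fun t => t = leaf) = PowerSeries.X := by
  ext n
  simp only [gf, PowerSeries.coeff_mk, PowerSeries.coeff_X]
  split_ifs with h
  · subst h
    rw [Nat.cast_eq_one, Nat.card_eq_one_iff_unique]
    refine ⟨⟨fun a b => Subtype.ext (a.2.2.trans b.2.2.symm)⟩, ⟨⟨leaf, rfl, rfl⟩⟩⟩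
  · rw [Nat.cast_eq_zero, Nat.card_eq_zero]
    left
    refine ⟨fun a => h ?_⟩
    have := a.2.1
    rw [a.2.2] at this
    simpa [leaves] using this.symm

/-- Class of trees obtained by grafting. -/
def Graft (f : LTree → LTree → LTree) (P Q : LTree → Prop) (t : LTree) : Prop :=
  ∃ u v, t = f u v ∧ P u ∧ Q v

lemma gf_graft (f : LTree → LTree → LTree) (P Q : LTree → Prop)
    (hf : ∀ u v u' v', f u v = f u' v' → u = u' ∧ v = v')
    (hl : ∀ u v, (f u v).leaves = u.leaves + v.leaves) :
    gf (Graft f P Q) = gf P * gf Q := by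
  ext n
  rw [PowerSeries.coeff_mul]
  simp only [gf, PowerSeries.coeff_mk]
  rw [← Finset.sum_coe_sort]
  simp only [← Nat.cast_mul, ← Nat.card_prod]
  rw [← Nat.cast_sum, ← Nat.card_sigma]
  congr 1
  symm
  refine Nat.card_eq_of_bijective (fun s => ⟨f s.2.1.1 s.2.2.1, ?_, ?_⟩) ⟨?_, ?_⟩
  · rw [hl, s.2.1.2.1, s.2.2.2.1]
    exact Finset.HasAntidiagonal.mem_antidiagonal.1 s.1.2
  · exact ⟨_, _, rfl, s.2.1.2.2, s.2.2.2.2⟩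
  · rintro ⟨⟨⟨i, j⟩, hij⟩, ⟨u, hu, hu'⟩, ⟨v, hv, hv'⟩⟩ ⟨⟨⟨i', j'⟩, hij'⟩, ⟨u', hu1, hu1'⟩, ⟨v', hv1, hv1'⟩⟩ h
    obtain ⟨rfl, rfl⟩ := hf _ _ _ _ (congrArg Subtype.val h)
    dsimp only at hu hv hu1 hv1
    subst hu hv hu1 hv1
    rfl
  · rintro ⟨t, ht, u, v, rfl, hu, hv⟩
    refine ⟨⟨⟨(u.leaves, v.leaves), ?_⟩, ⟨u, rfl, hu⟩, ⟨v, rfl, hv⟩⟩, rfl⟩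
    rw [Finset.HasAntidiagonal.mem_antidiagonal, ← ht, hl]

lemma avoids_leaf : AvoidsFlex leaf := by
  intro s hs
  cases hs
  simp [IsBadFlex]

lemma avoids_x (u v : LTree) : AvoidsFlex (x u v) ↔ AvoidsFlex u ∧ AvoidsFlex v := by
  constructor
  · exact fun h => ⟨fun s hs => h s (.xl hs), fun s hs => h s (.xr hs)⟩
  · rintro ⟨h1, h2⟩ s hs
    cases hs with
    | refl => simp [IsBadFlex]
    | xl h => exact h1 s h
    | xr h => exact h2 s h

lemma avoids_y (u v : LTree) :
    AvoidsFlex (y u v) ↔ AvoidsFlex u ∧ AvoidsFlex v ∧ ¬ IsBadFlex (y u v) := by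
  constructor
  · exact fun h => ⟨fun s hs => h s (.yl hs), fun s hs => h s (.yr hs), h _ (.refl _)⟩
  · rintro ⟨h1, h2, h3⟩ s hs
    cases hs with
    | refl => exact h3
    | yl h => exact h1 s h
    | yr h => exact h2 s h

/-- Avoiding trees with root `y`. -/
def YC (t : LTree) : Prop := AvoidsFlex t ∧ ∃ u v, t = y u v

lemma avoids_iff (t : LTree) :
    AvoidsFlex t ↔ (t = leaf ∨ Graft x AvoidsFlex AvoidsFlex t) ∨ YC t := by
  cases t with
  | leaf => simp [avoids_leaf]
  | x u v => simp [avoids_x, Graft, YC]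
  | y u v => simp [YC, Graft]

lemma yc_iff (t : LTree) : YC t ↔ Graft y AvoidsFlex
    (fun v => v = leaf ∨ Graft x AvoidsFlex (fun b => b = leaf ∨ YC b) v) t := by
  cases t with
  | leaf => simp [YC, Graft]
  | x u v => simp [YC, Graft]
  | y u v =>
    rcases v with _ | ⟨a, b⟩ | ⟨a, b⟩
    · simp [YC, Graft, avoids_y, avoids_leaf, IsBadFlex]
    · rcases b with _ | ⟨c, d⟩ | ⟨c, d⟩ <;>
        simp [YC, Graft, avoids_y, avoids_x, avoids_leaf, IsBadFlex]
    · simp [YC, Graft, avoids_y, IsBadFlex]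

lemma gf_x (P Q : LTree → Prop) : gf (Graft x P Q) = gf P * gf Q :=
  gf_graft x P Q (fun _ _ _ _ h => by simpa using h) (fun _ _ => rfl)

lemma gf_y (P Q : LTree → Prop) : gf (Graft y P Q) = gf P * gf Q :=
  gf_graft y P Q (fun _ _ _ _ h => by simpa using h) (fun _ _ => rfl)

lemma gf_A : gf AvoidsFlex = PowerSeries.X + gf AvoidsFlex * gf AvoidsFlex + gf YC := by
  conv_lhs => rw [gf_congr avoids_iff]
  rw [gf_or, gf_or, gf_leaf, gf_x]
  · rintro t rfl ⟨u, v, h, _⟩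
    cases h
  · rintro t (rfl | ⟨u, v, rfl, _⟩) ⟨_, a, b, h⟩ <;> cases h

lemma gf_YC : gf YC = gf AvoidsFlex *
    (PowerSeries.X + gf AvoidsFlex * (PowerSeries.X + gf YC)) := by
  conv_lhs => rw [gf_congr yc_iff]
  rw [gf_y, gf_or, gf_leaf, gf_x, gf_or, gf_leaf]
  · rintro t rfl ⟨_, a, b, h⟩
    cases h
  · rintro t rfl ⟨u, v, h, _⟩
    cases h

lemma coeff_zero_gf : PowerSeries.constantCoeff (gf AvoidsFlex) = 0 := by
  rw [← PowerSeries.coeff_zero_eq_constantCoeff_apply]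
  simp only [gf, PowerSeries.coeff_mk]
  rw [Nat.cast_eq_zero, Nat.card_eq_zero]
  left
  refine ⟨fun a => ?_⟩
  have := one_le_leaves a.1
  have := a.2.1
  omega

lemma gf_eq : PowerSeries.X = gf AvoidsFlex * (1 - gf AvoidsFlex) ^ 2 := by
  have h1 := gf_A
  have h2 := gf_YC
  have h0 := coeff_zero_gf
  generalize gf AvoidsFlex = A at *
  generalize gf YC = Y at *
  have hne : (1 + A) ≠ 0 := by
    intro h
    have := congrArg PowerSeries.constantCoeff h
    simp [h0] at this
  apply mul_left_cancel₀ hne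
  have : Y = A - PowerSeries.X - A * A := by linear_combination -h1
  subst this
  linear_combination -h2

lemma exists_B : ∃ B : PowerSeries ℚ, B = 1 + PowerSeries.X * B ^ 3 ∧
    PowerSeries.constantCoeff B = 1 ∧ gf AvoidsFlex = PowerSeries.X * B ^ 2 := by
  have h := gf_eq
  have h0 := coeff_zero_gf
  generalize gf AvoidsFlex = A at *
  have hB : (1 - A) * (1 - A)⁻¹ = 1 := PowerSeries.mul_inv_cancel _ (by simp [h0])
  have hc : PowerSeries.constantCoeff (1 - A)⁻¹ = 1 := by simp [h0]
  generalize (1 - A)⁻¹ = B at *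
  have hA : A = PowerSeries.X * B ^ 2 := by
    rw [h]
    have : A * (1 - A) ^ 2 * B ^ 2 = A * ((1 - A) * B) ^ 2 := by ring
    rw [this, hB]; ring
  refine ⟨B, ?_, hc, hA⟩
  have : PowerSeries.X * B ^ 3 = A * B := by rw [hA]; ring
  rw [this]
  linear_combination hB

lemma coeff_B (B : PowerSeries ℚ) (hB : B = 1 + PowerSeries.X * B ^ 3)
    (hc : PowerSeries.constantCoeff B = 1) (n : ℕ) : ∀ k : ℕ,
    (3 * n + k : ℚ) * PowerSeries.coeff n (B ^ k) = k * ((3 * n + k).choose n : ℚ) := by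
  induction n with
  | zero => intro k; simp [hc]
  | succ n ih =>
    intro k
    induction k with
    | zero => simp [PowerSeries.coeff_one]
    | succ k ihk =>
      have hpow : B ^ (k + 1) = B ^ k + PowerSeries.X * B ^ (k + 3) := by
        calc B ^ (k + 1) = B ^ k * B := pow_succ _ _
          _ = B ^ k * (1 + PowerSeries.X * B ^ 3) := by rw [← hB]
          _ = _ := by ring
      have h2 := ih (k + 3)
      rw [hpow, map_add, PowerSeries.coeff_succ_X_mul]
      generalize PowerSeries.coeff n (B ^ (k + 3)) = c2 at *
      generalize PowerSeries.coeff (n + 1) (B ^ k) = c1 at *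
      have e1 : 3 * (n + 1) + k = 3 * n + k + 3 := by ring
      have e2 : 3 * n + (k + 3) = 3 * n + k + 3 := by ring
      have e3 : 3 * (n + 1) + (k + 1) = 3 * n + k + 3 + 1 := by ring
      rw [e1] at ihk
      rw [e2] at h2
      rw [e3]
      have hN : (3 * n + k + 3 : ℚ) ≠ 0 := by positivity
      have hn : (n + 1 : ℚ) ≠ 0 := by positivity
      have i1 : ((3 * n + k + 3).choose (n + 1) : ℚ) * (n + 1)
          = (3 * n + k + 3).choose n * (2 * n + k + 3) := by
        have := Nat.choose_succ_right_eq (3 * n + k + 3) n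
        rw [show 3 * n + k + 3 - n = 2 * n + k + 3 by omega] at this
        exact_mod_cast this
      have i2 : ((3 * n + k + 3 + 1).choose (n + 1) : ℚ) * (n + 1)
          = (3 * n + k + 3 + 1) * (3 * n + k + 3).choose n := by
        have := Nat.add_one_mul_choose_eq (3 * n + k + 3) n
        exact_mod_cast this.symm
      generalize ((3 * n + k + 3 + 1).choose (n + 1) : ℚ) = D at *
      generalize ((3 * n + k + 3).choose (n + 1) : ℚ) = E at *
      generalize ((3 * n + k + 3).choose n : ℚ) = F at *
      push_cast at *
      apply mul_left_cancel₀ hN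
      apply mul_left_cancel₀ hn
      linear_combination (n + 1 : ℚ) * (3 * n + k + 4) * ihk + (n + 1 : ℚ) * (3 * n + k + 4) * h2
        + (3 * n + k + 4 : ℚ) * k * i1 - (3 * n + k + 3 : ℚ) * (k + 1) * i2

lemma main_count (n : ℕ) :
    (n + 1) * Nat.card {t : LTree // t.leaves = n + 1 ∧ AvoidsFlex t} = (3 * n + 1).choose n := by
  obtain ⟨B, hB, hc, hA⟩ := exists_B
  have h := coeff_B B hB hc n 2
  have h1 := congrArg (PowerSeries.coeff (n + 1)) hA
  rw [PowerSeries.coeff_succ_X_mul] at h1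
  rw [← h1] at h
  simp only [gf, PowerSeries.coeff_mk] at h
  have i : ((3 * n + 2).choose n : ℚ) * (2 * n + 2) = (3 * n + 1).choose n * (3 * n + 2) := by
    have := Nat.choose_mul_succ_eq (3 * n + 1) n
    rw [show 3 * n + 1 + 1 - n = 2 * n + 2 by omega] at this
    exact_mod_cast this.symm
  have hN : (3 * n + 2 : ℚ) ≠ 0 := by positivity
  have : ((n + 1 : ℕ) : ℚ) * (Nat.card {t : LTree // t.leaves = n + 1 ∧ AvoidsFlex t} : ℚ)
      = ((3 * n + 1).choose n : ℚ) := by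
    apply mul_left_cancel₀ hN
    push_cast at *
    linear_combination (n + 1 : ℚ) * h + i
  exact_mod_cast this

end LTree

open LTree in
/-- For every `n ≥ 1`, the number of labeled planar binary trees with `n` leaves
avoiding the two patterns `y(*, y(*,*))` and `y(*, x(*, x(*,*)))`
(i.e. `dim (noncom-Flex)(n)`) equals `(3n-2)! / (n! (2n-1)!) = (1/n)·C(3n-2, n-1)`;
in particular `n` divides `C(3n-2, n-1)`. -/
theorem noncomFlex_dim :
    ∀ n : ℕ, 1 ≤ n →
      n ∣ (3 * n - 2).choose (n - 1) ∧
      Nat.card {t : LTree // t.leaves = n ∧ AvoidsFlex t} =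
        (3 * n - 2).choose (n - 1) / n := by
  intro n hn
  obtain ⟨m, rfl⟩ : ∃ m, n = m + 1 := ⟨n - 1, by omega⟩
  have h := main_count m
  rw [show 3 * (m + 1) - 2 = 3 * m + 1 by omega, Nat.add_sub_cancel, ← h]
  exact ⟨Dvd.intro _ rfl, (Nat.mul_div_cancel_left _ (Nat.succ_pos m)).symm⟩
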